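/- Let K ⊆ S¹ be a Cantor set (a nonempty compact, perfect, totally disconnected subset of the circle). The quotient space of S¹ obtained by collapsing the closure of each connected component of S¹ \ K to a single point is homeomorphic to S¹. -/

import Mathlib

/-!
Order the line by declaring `s` strictly before `t` when the lift of `K` to `ℝ` meets the open
interval `(s, t)`. Since `K` has no isolated points, this is a total preorder, and it is dense and
without endpoints on any countable dense set of reals. By Cantor's isomorphism theorem such a set
maps onto `ℚ`, and extending this map by suprema gives a continuous monotone function which is
constant exactly on the closed gaps. Rescaled so as to fix both ends of a period that starts at a
point of `K`, it descends to a continuous surjection of the circle whose fibres are the classes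
being collapsed; a continuous bijection from a compact space onto a Hausdorff one is a
homeomorphism.
-/

open Set TopologicalSpace

theorem preperfect_nontrivial_inter {X : Type*} [TopologicalSpace X] {K U : Set X}
    (hK : Preperfect K) (hU : IsOpen U) (hne : (K ∩ U).Nonempty) : (K ∩ U).Nontrivial := by
  obtain ⟨x, hxK, hxU⟩ := hne
  obtain ⟨y, ⟨hyU, hyK⟩, hyx⟩ := preperfect_iff_nhds.1 hK x hxK U (hU.mem_nhds hxU)
  exact ⟨y, ⟨hyK, hyU⟩, x, ⟨hxK, hxU⟩, hyx⟩

theorem preperfect_preimage {X Y : Type*} [TopologicalSpace X] [TopologicalSpace Y] {f : X → Y}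
    (hf : IsOpenMap f) {K : Set Y} (hK : Preperfect K) : Preperfect (f ⁻¹' K) := by
  refine preperfect_iff_nhds.2 fun x hx U hU => ?_
  obtain ⟨_, ⟨⟨y, hyU, rfl⟩, hyK⟩, hne⟩ :=
    preperfect_iff_nhds.1 hK (f x) hx _ (hf.image_mem_nhds hU)
  exact ⟨y, ⟨hyU, hyK⟩, fun h => hne (congrArg f h)⟩

theorem exists_surjective_rat_lt_iff_lt {β : Type*} [Preorder β] [Std.Total (α := β) (· ≤ ·)]
    [Countable β] [Nonempty β] [DenselyOrdered β] [NoMinOrder β] [NoMaxOrder β] :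
    ∃ g : β → ℚ, Function.Surjective g ∧ ∀ a b, g a < g b ↔ a < b := by
  classical
  let Q := Antisymmetrization β (· ≤ ·)
  let π : β → Q := toAntisymmetrization (· ≤ ·)
  have π_surj : Function.Surjective π := Quotient.mk_surjective
  have π_lt (a b : β) : π a < π b ↔ a < b := toAntisymmetrization_lt_toAntisymmetrization_iff
  have : Countable Q := π_surj.countable
  have : Nonempty Q := ‹Nonempty β›.map π
  have : DenselyOrdered Q := ⟨π_surj.forall₂.2 fun a b hab =>
    let ⟨c, hac, hcb⟩ := exists_between ((π_lt a b).1 hab)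
    ⟨π c, (π_lt a c).2 hac, (π_lt c b).2 hcb⟩⟩
  have : NoMinOrder Q := ⟨π_surj.forall.2 fun a =>
    let ⟨b, hb⟩ := exists_lt a
    ⟨π b, (π_lt b a).2 hb⟩⟩
  have : NoMaxOrder Q := ⟨π_surj.forall.2 fun a =>
    let ⟨b, hb⟩ := exists_gt a
    ⟨π b, (π_lt a b).2 hb⟩⟩
  obtain ⟨φ⟩ := Order.iso_of_countable_dense Q ℚ
  exact ⟨φ ∘ π, φ.surjective.comp π_surj, fun a b => φ.lt_iff_lt.trans (π_lt a b)⟩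

theorem exists_monotone_continuous_extension {ι α β : Type*}
    [LinearOrder α] [TopologicalSpace α] [OrderTopology α]
    [ConditionallyCompleteLinearOrder β] [TopologicalSpace β] [OrderTopology β] [DenselyOrdered β]
    {e : ι → α} {g : ι → β} (hmono : ∀ i j, e i ≤ e j → g i ≤ g j) (hg : DenseRange g)
    (hbelow : ∀ x, ∃ i, e i ≤ x) (habove : ∀ x, ∃ i, x ≤ e i) :
    ∃ F : α → β, Monotone F ∧ Continuous F ∧ ∀ i, F (e i) = g i := by
  let F (x : α) : β := sSup (g '' {i | e i ≤ x})
  have F_nonempty (x : α) : (g '' {i | e i ≤ x}).Nonempty := Set.Nonempty.image g (hbelow x)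
  have F_bddAbove (x : α) : BddAbove (g '' {i | e i ≤ x}) := by
    obtain ⟨j, hj⟩ := habove x
    exact ⟨g j, forall_mem_image.2 fun i hi => hmono i j (hi.trans hj)⟩
  have F_mono : Monotone F := fun x y hxy =>
    csSup_le_csSup (F_bddAbove y) (F_nonempty x) (image_mono fun _ hi => hi.trans hxy)
  have F_apply (i : ι) : F (e i) = g i :=
    IsGreatest.csSup_eq ⟨mem_image_of_mem g le_rfl, forall_mem_image.2 fun j hj => hmono j i hj⟩
  have F_dense : DenseRange F := hg.mono (range_subset_iff.2 fun i => ⟨e i, F_apply i⟩)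
  exact ⟨F, F_mono, F_mono.continuous_of_denseRange F_dense, F_apply⟩

section Staircase

variable {α : Type*} [LinearOrder α] [TopologicalSpace α] {C : Set α}

/-- `F` is a devil's staircase for `C`: a continuous function which rises from `s` to `t` exactly
when `C` has a point strictly between them. In particular `F` is monotone. -/
structure IsStaircase (C : Set α) (F : α → ℝ) : Prop where
  continuous : Continuous F
  lt_iff (s t : α) : F s < F t ↔ (C ∩ Ioo s t).Nonempty

namespace IsStaircase

variable {F : α → ℝ}

theorem monotone (hF : IsStaircase C F) : Monotone F := by
  intro s t hst
  by_contra! hlt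
  obtain ⟨c, -, htc, hcs⟩ := (hF.lt_iff t s).1 hlt
  exact (htc.trans hcs).not_ge hst

theorem inter_Ioo_eq_empty (hF : IsStaircase C F) {s t : α} (h : F s = F t) :
    C ∩ Ioo s t = ∅ :=
  not_nonempty_iff_eq_empty.1 fun hne => ((hF.lt_iff s t).2 hne).ne h

theorem eq_of_inter_Ioo_eq_empty (hF : IsStaircase C F) {s t : α} (hst : s ≤ t)
    (h : C ∩ Ioo s t = ∅) : F s = F t :=
  (hF.monotone hst).eq_of_not_lt fun hlt => ((hF.lt_iff s t).1 hlt).ne_empty h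

theorem exists_rescale (hF : IsStaircase C F) {a b : α} (hab : (C ∩ Ioo a b).Nonempty) {c d : ℝ}
    (hcd : c < d) : ∃ G, IsStaircase C G ∧ G a = c ∧ G b = d := by
  have hFab : 0 < F b - F a := sub_pos.2 ((hF.lt_iff a b).2 hab)
  have hslope : 0 < (d - c) / (F b - F a) := div_pos (sub_pos.2 hcd) hFab
  have hcont := hF.continuous
  refine ⟨fun t => c + (d - c) / (F b - F a) * (F t - F a),
    ⟨by fun_prop, fun s t => ?_⟩, by simp, ?_⟩
  · simp only [add_lt_add_iff_left, mul_lt_mul_iff_right₀ hslope, sub_lt_sub_iff_right, hF.lt_iff]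
  · simp only [div_mul_cancel₀ _ hFab.ne', add_sub_cancel]

end IsStaircase

variable [OrderClosedTopology α]

theorem exists_lt_of_inter_Ioo_nonempty (hC : Preperfect C) {s t : α}
    (h : (C ∩ Ioo s t).Nonempty) : ∃ c ∈ C, ∃ c' ∈ C, s < c ∧ c < c' ∧ c' < t := by
  obtain ⟨c, hc, c', hc', hlt⟩ := (preperfect_nontrivial_inter hC isOpen_Ioo h).exists_lt
  exact ⟨c, hc.1, c', hc'.1, hc.2.1, hlt, hc'.2.2⟩

/-- The total preorder in which `s` strictly precedes `t` when `C` has a point strictly between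
them; two points are equivalent when they coincide or lie in the same closed gap of `C`.
Transitivity uses that `C` has no isolated points: two gaps on either side of an isolated point
would be adjacent. -/
abbrev gapPreorder (hC : Preperfect C) : Preorder α where
  le s t := ¬(C ∩ Ioo t s).Nonempty
  lt s t := (C ∩ Ioo s t).Nonempty
  le_refl s := by simp
  le_trans s t u hst htu hus := by
    obtain ⟨c, hc, c', hc', huc, hcc', hcs⟩ := exists_lt_of_inter_Ioo_nonempty hC hus
    have htc : t ≤ c := not_lt.1 fun h => htu ⟨c, hc, huc, h⟩
    exact hst ⟨c', hc', htc.trans_lt hcc', hcs⟩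
  lt_iff_le_not_ge s t := by
    rw [not_not, iff_and_self]
    rintro ⟨c, -, hsc, hct⟩ ⟨c', -, htc', hcs'⟩
    exact (hsc.trans hct).not_gt (htc'.trans hcs')

variable [DenselyOrdered α]

theorem exists_mem_Ioo_of_denseRange {ι : Type*} {e : ι → α} (he : DenseRange e) {s t : α}
    (hst : s < t) : ∃ i, e i ∈ Ioo s t :=
  exists_range_iff.1 (Dense.exists_between he hst)

theorem exists_surjective_rat_lt_iff_inter_Ioo_nonempty {ι : Type*} [Countable ι] [Nonempty ι]
    {e : ι → α} (he : DenseRange e) (hC : Preperfect C) (hbelow : ¬BddBelow C)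
    (habove : ¬BddAbove C) :
    ∃ g : ι → ℚ, Function.Surjective g ∧ ∀ i j, g i < g j ↔ (C ∩ Ioo (e i) (e j)).Nonempty := by
  let : Preorder ι := @Preorder.lift ι α (gapPreorder hC) e
  have : Std.Total (α := ι) (· ≤ ·) := ⟨fun i j =>
    or_iff_not_imp_left.2 fun h => le_of_lt (α := ι) (not_not.1 h)⟩
  have : DenselyOrdered ι := ⟨fun i j hij => by
    obtain ⟨c, hc, c', hc', hic, hcc', hcj⟩ := exists_lt_of_inter_Ioo_nonempty hC hij
    obtain ⟨k, hck, hkc⟩ := exists_mem_Ioo_of_denseRange he hcc'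
    exact ⟨k, ⟨c, hc, hic, hck⟩, ⟨c', hc', hkc, hcj⟩⟩⟩
  have : NoMinOrder ι := ⟨fun i => by
    obtain ⟨c, hc, hci⟩ := not_bddBelow_iff.1 hbelow (e i)
    obtain ⟨c', -, hcc'⟩ := not_bddBelow_iff.1 hbelow c
    obtain ⟨k, -, hkc⟩ := exists_mem_Ioo_of_denseRange he hcc'
    exact ⟨k, c, hc, hkc, hci⟩⟩
  have : NoMaxOrder ι := ⟨fun i => by
    obtain ⟨c, hc, hic⟩ := not_bddAbove_iff.1 habove (e i)
    obtain ⟨c', -, hcc'⟩ := not_bddAbove_iff.1 habove c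
    obtain ⟨k, hck, -⟩ := exists_mem_Ioo_of_denseRange he hcc'
    exact ⟨k, c, hc, hic, hck⟩⟩
  exact exists_surjective_rat_lt_iff_lt

end Staircase

theorem exists_isStaircase {α : Type*} [LinearOrder α] [TopologicalSpace α] [OrderTopology α]
    [DenselyOrdered α] [SeparableSpace α] [Nonempty α] {C : Set α} (hC : Preperfect C)
    (hbelow : ¬BddBelow C) (habove : ¬BddAbove C) : ∃ F, IsStaircase C F := by
  let e : ℕ → α := denseSeq α
  have he : DenseRange e := denseRange_denseSeq α
  have : NoMinOrder α := ⟨fun x => (not_bddBelow_iff.1 hbelow x).imp fun _ h => h.2⟩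
  have : NoMaxOrder α := ⟨fun x => (not_bddAbove_iff.1 habove x).imp fun _ h => h.2⟩
  obtain ⟨g, g_surj, g_lt⟩ :=
    exists_surjective_rat_lt_iff_inter_Ioo_nonempty he hC hbelow habove
  have g_mono (i j : ℕ) (hij : e i ≤ e j) : (g i : ℝ) ≤ g j := by
    rw [Rat.cast_le, ← not_lt, g_lt, Ioo_eq_empty hij.not_gt, inter_empty]
    exact not_nonempty_empty
  have g_dense : DenseRange fun i => (g i : ℝ) :=
    Rat.denseRange_cast.comp g_surj.denseRange Rat.continuous_coe_real
  obtain ⟨F, F_mono, F_cont, F_apply⟩ := exists_monotone_continuous_extension g_mono g_dense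
    (fun x => exists_range_iff.1 (he.exists_le x)) (fun x => exists_range_iff.1 (he.exists_ge x))
  refine ⟨F, F_cont, fun s t => ⟨fun hst => ?_, ?_⟩⟩
  · obtain ⟨i, hsi, hit⟩ := exists_mem_Ioo_of_denseRange g_dense hst
    obtain ⟨j, hij, hjt⟩ := exists_mem_Ioo_of_denseRange g_dense hit
    obtain ⟨c, hc, hic, hcj⟩ := (g_lt i j).1 (Rat.cast_lt.1 hij)
    have hsi' : s < e i := F_mono.reflect_lt (hsi.trans_eq (F_apply i).symm)
    have hjt' : e j < t := F_mono.reflect_lt ((F_apply j).trans_lt hjt)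
    exact ⟨c, hc, hsi'.trans hic, hcj.trans hjt'⟩
  · rintro ⟨c, hc, hsc, hct⟩
    obtain ⟨i, hsi, hic⟩ := exists_mem_Ioo_of_denseRange he hsc
    obtain ⟨j, hcj, hjt⟩ := exists_mem_Ioo_of_denseRange he hct
    calc F s ≤ F (e i) := F_mono hsi.le
      _ = g i := F_apply i
      _ < g j := Rat.cast_lt.2 ((g_lt i j).2 ⟨c, hc, hic, hcj⟩)
      _ = F (e j) := (F_apply j).symm
      _ ≤ F t := F_mono hjt.le

theorem nonempty_quot_homeomorph {X Y : Type*} [TopologicalSpace X] [CompactSpace X]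
    [TopologicalSpace Y] [T2Space Y] {r : X → X → Prop} {f : X → Y} (hf : Continuous f)
    (hsurj : Function.Surjective f) (hfib : ∀ x y, f x = f y ↔ Quot.mk r x = Quot.mk r y) :
    Nonempty (Quot r ≃ₜ Y) := by
  have hresp (x y : X) (h : r x y) : f x = f y := (hfib x y).2 (Quot.sound h)
  have hinj : Function.Injective (Quot.lift f hresp) := by
    rintro ⟨x⟩ ⟨y⟩ h
    exact (hfib x y).1 h
  have hbij : Function.Bijective (Quot.lift f hresp) :=
    ⟨hinj, (Quot.surjective_lift hresp).2 hsurj⟩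
  exact ⟨Continuous.homeoOfEquivCompactToT2 (f := Equiv.ofBijective _ hbij)
    (continuous_quot_lift hresp hf)⟩

/-- Two points are related when they lie in the closure of a common gap of `K`, a gap being a
connected component of the complement. This is not reflexive on the points of `K` outside all closed
gaps; only the equivalence relation it generates matters for the quotient. -/
def GapRel {X : Type*} [TopologicalSpace X] (K : Set X) (x y : X) : Prop :=
  ∃ z ∈ Kᶜ, x ∈ closure (connectedComponentIn Kᶜ z) ∧ y ∈ closure (connectedComponentIn Kᶜ z)

theorem gapRel_of_mem_closure {X : Type*} [TopologicalSpace X] {K S : Set X}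
    (hS : IsPreconnected S) (hSK : S ⊆ Kᶜ) {x y : X} (hx : x ∈ closure S) (hy : y ∈ closure S) :
    GapRel K x y := by
  obtain ⟨z, hz⟩ := closure_nonempty_iff.1 ⟨x, hx⟩
  have hsub : closure S ⊆ closure (connectedComponentIn Kᶜ z) :=
    closure_mono (hS.subset_connectedComponentIn hz hSK)
  exact ⟨z, hSK hz, hsub hx, hsub hy⟩

theorem eq_of_gapRel {X Y : Type*} [TopologicalSpace X] [TopologicalSpace Y] [T2Space Y]
    {K : Set X} {f : X → Y} (hf : Continuous f)
    (hconst : ∀ S, IsPreconnected S → S ⊆ Kᶜ → ∀ x ∈ S, ∀ y ∈ S, f x = f y) {x y : X}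
    (h : GapRel K x y) : f x = f y := by
  obtain ⟨z, hz, hx, hy⟩ := h
  have hgap : EqOn f (fun _ => f z) (connectedComponentIn Kᶜ z) := fun w hw =>
    hconst _ isPreconnected_connectedComponentIn (connectedComponentIn_subset _ _) w hw z
      (mem_connectedComponentIn hz)
  have hclosure := hgap.closure hf continuous_const
  exact (hclosure hx).trans (hclosure hy).symm

section Circle

variable {T : ℝ} {K : Set (AddCircle T)}

theorem mk_gapRel_coe_eq_of_inter_Ioo_eq_empty {s t : ℝ} (hst : s ≤ t)
    (h : (↑) ⁻¹' K ∩ Ioo s t = ∅) :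
    Quot.mk (GapRel K) (s : AddCircle T) = Quot.mk (GapRel K) (t : AddCircle T) := by
  rcases hst.eq_or_lt with rfl | hlt
  · rfl
  have hcont : Continuous ((↑) : ℝ → AddCircle T) := AddCircle.continuous_mk' T
  have hgap : (↑) '' Ioo s t ⊆ Kᶜ :=
    image_subset_iff.2 fun u hu huK => (h.subset ⟨huK, hu⟩).elim
  have hclosure (u : ℝ) (hu : u ∈ Icc s t) : (u : AddCircle T) ∈ closure ((↑) '' Ioo s t) :=
    image_closure_subset_closure_image hcont
      (mem_image_of_mem _ ((closure_Ioo hlt.ne).superset hu))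
  exact Quot.sound (gapRel_of_mem_closure (isPreconnected_Ioo.image _ hcont.continuousOn) hgap
    (hclosure s (left_mem_Icc.2 hst)) (hclosure t (right_mem_Icc.2 hst)))

theorem mk_gapRel_coe_eq_of_isStaircase {F : ℝ → ℝ} (hF : IsStaircase ((↑) ⁻¹' K) F) {s t : ℝ}
    (h : F s = F t) :
    Quot.mk (GapRel K) (s : AddCircle T) = Quot.mk (GapRel K) (t : AddCircle T) := by
  rcases le_total s t with hst | hts
  · exact mk_gapRel_coe_eq_of_inter_Ioo_eq_empty hst (hF.inter_Ioo_eq_empty h)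
  · exact (mk_gapRel_coe_eq_of_inter_Ioo_eq_empty hts (hF.inter_Ioo_eq_empty h.symm)).symm

variable [hT : Fact (0 < T)]

theorem not_bddAbove_preimage_coe (hK : K.Nonempty) :
    ¬BddAbove ((↑) ⁻¹' K : Set ℝ) := by
  obtain ⟨x, hx⟩ := hK
  refine not_bddAbove_iff.2 fun b => ?_
  obtain ⟨t, ht, rfl⟩ := (AddCircle.coe_image_Ioc_eq T b).superset (mem_univ x)
  exact ⟨t, hx, ht.1⟩

theorem not_bddBelow_preimage_coe (hK : K.Nonempty) :
    ¬BddBelow ((↑) ⁻¹' K : Set ℝ) := by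
  obtain ⟨x, hx⟩ := hK
  refine not_bddBelow_iff.2 fun b => ?_
  obtain ⟨t, ht, rfl⟩ := (AddCircle.coe_image_Ico_eq T (b - T)).superset (mem_univ x)
  exact ⟨t, hx, ht.2.trans_eq (sub_add_cancel b T)⟩

theorem exists_mem_Ioo_coe_eq_of_ne {a : ℝ} {x : AddCircle T} (hx : x ≠ a) :
    ∃ t ∈ Ioo a (a + T), (t : AddCircle T) = x := by
  obtain ⟨t, ht, rfl⟩ := (AddCircle.coe_image_Ico_eq T a).superset (mem_univ x)
  exact ⟨t, ⟨ht.1.lt_of_ne fun h => hx (h ▸ rfl), ht.2⟩, rfl⟩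

theorem ordConnected_Ioo_inter_preimage_coe {S : Set (AddCircle T)} (hS : IsPreconnected S) {a : ℝ}
    (ha : (a : AddCircle T) ∉ S) : OrdConnected (Ioo a (a + T) ∩ (↑) ⁻¹' S) := by
  let chart := AddCircle.openPartialHomeomorphCoe T a
  have hsub : S ⊆ chart.target := subset_compl_singleton_iff.2 ha
  have himage : chart.symm '' S = Ioo a (a + T) ∩ (↑) ⁻¹' S :=
    chart.symm_image_eq_source_inter_preimage hsub
  rw [← himage]
  exact (hS.image _ (chart.continuousOn_symm.mono hsub)).ordConnected

theorem eq_or_endpoints_of_coe_eq_coe {a u v : ℝ} (hu : u ∈ Icc a (a + T)) (hv : v ∈ Icc a (a + T))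
    (huv : u ≤ v) (h : (u : AddCircle T) = v) : u = v ∨ u = a ∧ v = a + T := by
  rcases hv.2.eq_or_lt with rfl | hv'
  · rcases hu.2.eq_or_lt with rfl | hu'
    · exact .inl rfl
    · rw [AddCircle.coe_add_period, AddCircle.coe_eq_coe_iff_of_mem_Ico ⟨hu.1, hu'⟩
        (left_mem_Ico.2 (lt_add_of_pos_right a hT.out))] at h
      exact .inr ⟨h, rfl⟩
  · exact .inl ((AddCircle.coe_eq_coe_iff_of_mem_Ico ⟨hu.1, huv.trans_lt hv'⟩ ⟨hv.1, hv'⟩).1 h)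

/-- The self-map of the circle induced by a function `F` on the period `[a, a + T)`. -/
noncomputable def circleMapOf (T : ℝ) [Fact (0 < T)] (a : ℝ) (F : ℝ → ℝ) :
    AddCircle T → AddCircle T :=
  AddCircle.liftIco T a fun t => (F t : AddCircle T)

section CircleMap

variable {a : ℝ} {F : ℝ → ℝ}

theorem continuous_circleMapOf (hF : Continuous F) (ha : F a = a) (hb : F (a + T) = a + T) :
    Continuous (circleMapOf T a F) :=
  AddCircle.liftIco_continuous (by rw [ha, hb, AddCircle.coe_add_period])
    ((AddCircle.continuous_mk' T).comp hF).continuousOn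

theorem circleMapOf_coe {t : ℝ} (ht : t ∈ Ico a (a + T)) :
    circleMapOf T a F t = (F t : AddCircle T) :=
  AddCircle.liftIco_coe_apply ht

theorem surjective_circleMapOf (hF : Continuous F) (ha : F a = a) (hb : F (a + T) = a + T) :
    Function.Surjective (circleMapOf T a F) := by
  intro y
  obtain ⟨u, hu, rfl⟩ := (AddCircle.coe_image_Ico_eq T a).superset (mem_univ y)
  have hivt : Ico (F a) (F (a + T)) ⊆ F '' Ico a (a + T) :=
    intermediate_value_Ico (le_add_of_nonneg_right hT.out.le) hF.continuousOn
  rw [ha, hb] at hivt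
  obtain ⟨t, ht, rfl⟩ := hivt hu
  exact ⟨t, circleMapOf_coe ht⟩

theorem circleMapOf_eq_of_isPreconnected (hF : IsStaircase ((↑) ⁻¹' K) F)
    (haK : (a : AddCircle T) ∈ K) {S : Set (AddCircle T)} (hS : IsPreconnected S) (hSK : S ⊆ Kᶜ)
    {x y : AddCircle T} (hx : x ∈ S) (hy : y ∈ S) : circleMapOf T a F x = circleMapOf T a F y := by
  have haS : (a : AddCircle T) ∉ S := fun h => hSK h haK
  have hord := ordConnected_Ioo_inter_preimage_coe hS haS
  obtain ⟨s, hs, rfl⟩ := exists_mem_Ioo_coe_eq_of_ne (ne_of_mem_of_not_mem hx haS)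
  obtain ⟨t, ht, rfl⟩ := exists_mem_Ioo_coe_eq_of_ne (ne_of_mem_of_not_mem hy haS)
  rw [circleMapOf_coe (Ioo_subset_Ico_self hs), circleMapOf_coe (Ioo_subset_Ico_self ht)]
  wlog hst : s ≤ t generalizing s t
  · exact (this t ht hy s hs hx (le_of_not_ge hst)).symm
  have hempty : (↑) ⁻¹' K ∩ Ioo s t = ∅ := eq_empty_of_forall_notMem fun u hu =>
    hSK (hord.out ⟨hs, hx⟩ ⟨ht, hy⟩ (Ioo_subset_Icc_self hu.2)).2 hu.1
  rw [hF.eq_of_inter_Ioo_eq_empty hst hempty]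

theorem mk_gapRel_eq_of_circleMapOf_eq (hF : IsStaircase ((↑) ⁻¹' K) F) (ha : F a = a)
    (hb : F (a + T) = a + T) {x y : AddCircle T}
    (h : circleMapOf T a F x = circleMapOf T a F y) :
    Quot.mk (GapRel K) x = Quot.mk (GapRel K) y := by
  obtain ⟨s, hs, rfl⟩ := (AddCircle.coe_image_Ico_eq T a).superset (mem_univ x)
  obtain ⟨t, ht, rfl⟩ := (AddCircle.coe_image_Ico_eq T a).superset (mem_univ y)
  rw [circleMapOf_coe hs, circleMapOf_coe ht] at h
  wlog hst : F s ≤ F t generalizing s t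
  · exact (this t ht s hs h.symm (le_of_not_ge hst)).symm
  have hFmem {u : ℝ} (hu : u ∈ Ico a (a + T)) : F u ∈ Icc a (a + T) :=
    ⟨ha.symm.trans_le (hF.monotone hu.1), (hF.monotone hu.2.le).trans_eq hb⟩
  rcases eq_or_endpoints_of_coe_eq_coe (hFmem hs) (hFmem ht) hst h with heq | ⟨hsa, htb⟩
  · exact mk_gapRel_coe_eq_of_isStaircase hF heq
  · calc Quot.mk (GapRel K) (s : AddCircle T)
        = Quot.mk _ (a : AddCircle T) := mk_gapRel_coe_eq_of_isStaircase hF (hsa.trans ha.symm)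
      _ = Quot.mk _ ((a + T : ℝ) : AddCircle T) := by rw [AddCircle.coe_add_period]
      _ = Quot.mk _ (t : AddCircle T) := mk_gapRel_coe_eq_of_isStaircase hF (hb.trans htb.symm)

theorem circleMapOf_eq_iff_mk_gapRel_eq (hF : IsStaircase ((↑) ⁻¹' K) F)
    (haK : (a : AddCircle T) ∈ K) (ha : F a = a) (hb : F (a + T) = a + T) (x y : AddCircle T) :
    circleMapOf T a F x = circleMapOf T a F y ↔
      Quot.mk (GapRel K) x = Quot.mk (GapRel K) y := by
  refine ⟨mk_gapRel_eq_of_circleMapOf_eq hF ha hb, fun h => ?_⟩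
  have hresp (x y : AddCircle T) (hxy : GapRel K x y) :
      circleMapOf T a F x = circleMapOf T a F y :=
    eq_of_gapRel (continuous_circleMapOf hF.continuous ha hb)
      (fun _ hS hSK _ hx _ hy => circleMapOf_eq_of_isPreconnected hF haK hS hSK hx hy) hxy
  exact congrArg (Quot.lift _ hresp) h

end CircleMap

theorem exists_isStaircase_eq_endpoints (hK : Preperfect K) {a : ℝ} (ha : (a : AddCircle T) ∈ K) :
    ∃ F : ℝ → ℝ, IsStaircase ((↑) ⁻¹' K) F ∧ F a = a ∧ F (a + T) = a + T := by
  have hlift : Preperfect ((↑) ⁻¹' K : Set ℝ) :=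
    preperfect_preimage QuotientAddGroup.isOpenMap_coe hK
  obtain ⟨F, hF⟩ := exists_isStaircase hlift (not_bddBelow_preimage_coe ⟨a, ha⟩)
    (not_bddAbove_preimage_coe ⟨a, ha⟩)
  have hmeets : ((↑) ⁻¹' K ∩ Ioo a (a + T) : Set ℝ).Nonempty := by
    have hK_nontrivial : (K ∩ univ).Nontrivial :=
      preperfect_nontrivial_inter hK isOpen_univ ⟨a, ha, mem_univ _⟩
    obtain ⟨y, ⟨hyK, -⟩, hya⟩ := hK_nontrivial.exists_ne (a : AddCircle T)
    obtain ⟨t, ht, rfl⟩ := exists_mem_Ioo_coe_eq_of_ne hya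
    exact ⟨t, hyK, ht⟩
  exact hF.exists_rescale hmeets (lt_add_of_pos_right a hT.out)

end Circle

theorem cantor_gap_collapse_is_circle_general {T : ℝ} [Fact (0 < T)] (K : Set (AddCircle T))
    (hne : K.Nonempty) (hacc : Preperfect K) : Nonempty (Quot (GapRel K) ≃ₜ AddCircle T) := by
  obtain ⟨x, hx⟩ := hne
  obtain ⟨a, rfl⟩ := QuotientAddGroup.mk_surjective x
  obtain ⟨F, hF, ha, hb⟩ := exists_isStaircase_eq_endpoints hacc hx
  exact nonempty_quot_homeomorph (continuous_circleMapOf hF.continuous ha hb)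
    (surjective_circleMapOf hF.continuous ha hb) (circleMapOf_eq_iff_mk_gapRel_eq hF hx ha hb)

/-- Collapsing the closure of each gap (connected component of the complement) of a
Cantor set `K ⊆ S¹` to a single point yields a quotient space homeomorphic to the
circle. -/
theorem cantor_gap_collapse_is_circle (K : Set (AddCircle (1:ℝ)))
    (hne : K.Nonempty) (hK : IsCompact K) (hperf : Perfect K)
    (htd : IsTotallyDisconnected K) :
    Nonempty
      (Quot (fun x y : AddCircle (1:ℝ) => ∃ z ∈ Kᶜ,
          x ∈ closure (connectedComponentIn Kᶜ z) ∧
          y ∈ closure (connectedComponentIn Kᶜ z)) ≃ₜ AddCircle (1:ℝ)) :=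
  cantor_gap_collapse_is_circle_general K hne hperf.acc
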